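/- arXiv:2308.01432 — 2 statements merged into one kernel-verified Lean document; each statement's English description precedes it below -/
import Mathlib

section
/- Let d, m₁, m₂ be positive integers, let (B¹_α)_{α ∈ Fin m₁} and (B²_β)_{β ∈ Fin m₂} be families of d×d complex matrices, and let U be a unitary d×d complex matrix (Uᴴ·U = 1 and U·Uᴴ = 1). Suppose u is an m₁×m₁ complex matrix and v is an m₂×m₂ complex matrix such that Uᴴ·B¹_α·U = Σ_γ u_{αγ}·B¹_γ for all α and Uᴴ·B²_β·U = Σ_δ v_{βδ}·B²_δ for all β. Let w¹ : Fin m₁ → ℂ, w² : Fin m₂ → ℂ, O = (Σ_α w¹_α·B¹_α)·(Σ_β w²_β·B²_β), let ρ be any d×d complex matrix, and set E^in_{γδ} = Tr(B¹_γ·B²_δ·ρ). Then Tr(O·U·ρ·Uᴴ) = Σ_{α,γ,δ,β} w¹_α·u_{αγ}·E^in_{γδ}·v_{βδ}·w²_β, i.e., the expectation value equals (w¹)ᵀ·(u·E^in·vᵀ)·w². (Result 3 of the paper: simulation of a product of two observables, each supported by a single invariant subspace, via the second-order correlator matrix E^out = u·E^in·vᵀ.) -/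
open Matrix

/-- **Result 3 (simulation of a product of two observables).** If a unitary `U`
acts on the families `(B¹ α)` and `(B² β)` by the matrices `u` and `v`, then
the expectation value of the product observable
`O = (∑ α, w¹ α • B¹ α) * (∑ β, w² β • B² β)` after the circuit equals
`(w¹)ᵀ · (u · E^in · vᵀ) · w²`, where `E^in γ δ = Tr(B¹ γ B² δ ρ)`. -/
theorem stmt8 (d m₁ m₂ : ℕ) (hd : 0 < d) (hm₁ : 0 < m₁) (hm₂ : 0 < m₂)
    (B₁ : Fin m₁ → Matrix (Fin d) (Fin d) ℂ)
    (B₂ : Fin m₂ → Matrix (Fin d) (Fin d) ℂ)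
    (U : Matrix (Fin d) (Fin d) ℂ) (hU : Uᴴ * U = 1 ∧ U * Uᴴ = 1)
    (u : Matrix (Fin m₁) (Fin m₁) ℂ)
    (v : Matrix (Fin m₂) (Fin m₂) ℂ)
    (hu : ∀ α, Uᴴ * B₁ α * U = ∑ γ, u α γ • B₁ γ)
    (hv : ∀ β, Uᴴ * B₂ β * U = ∑ δ, v β δ • B₂ δ)
    (w₁ : Fin m₁ → ℂ) (w₂ : Fin m₂ → ℂ)
    (O : Matrix (Fin d) (Fin d) ℂ)
    (hO : O = (∑ α, w₁ α • B₁ α) * (∑ β, w₂ β • B₂ β))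
    (ρ : Matrix (Fin d) (Fin d) ℂ)
    (Ein : Matrix (Fin m₁) (Fin m₂) ℂ)
    (hEin : ∀ γ δ, Ein γ δ = (B₁ γ * B₂ δ * ρ).trace) :
    (O * U * ρ * Uᴴ).trace =
      ∑ α, ∑ γ, ∑ δ, ∑ β, w₁ α * u α γ * Ein γ δ * v β δ * w₂ β := by
  have hX : Uᴴ * (∑ α, w₁ α • B₁ α) * U = ∑ α, ∑ γ, (w₁ α * u α γ) • B₁ γ := by
    rw [Finset.mul_sum, Finset.sum_mul]
    refine Finset.sum_congr rfl fun α _ => ?_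
    rw [Matrix.mul_smul, Matrix.smul_mul, hu, Finset.smul_sum]
    simp only [smul_smul]
  have hY : Uᴴ * (∑ β, w₂ β • B₂ β) * U = ∑ δ, ∑ β, (w₂ β * v β δ) • B₂ δ := by
    rw [Finset.sum_comm, Finset.mul_sum, Finset.sum_mul]
    refine Finset.sum_congr rfl fun α _ => ?_
    rw [Matrix.mul_smul, Matrix.smul_mul, hv, Finset.smul_sum]
    simp only [smul_smul]
  have hZ : Uᴴ * O * U = (Uᴴ * (∑ α, w₁ α • B₁ α) * U) * (Uᴴ * (∑ β, w₂ β • B₂ β) * U) := by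
    rw [hO]
    generalize (∑ α, w₁ α • B₁ α) = X
    generalize (∑ β, w₂ β • B₂ β) = Y
    calc Uᴴ * (X * Y) * U = Uᴴ * X * 1 * Y * U := by simp only [Matrix.mul_assoc, Matrix.one_mul]
      _ = _ := by rw [← hU.2]; simp only [Matrix.mul_assoc]
  have hT : (O * U * ρ * Uᴴ).trace = (Uᴴ * O * U * ρ).trace := by
    rw [Matrix.trace_mul_comm]; simp only [Matrix.mul_assoc]
  rw [hT, hZ, hX, hY]
  simp only [Finset.sum_mul, Matrix.trace_sum]
  refine Finset.sum_congr rfl fun α _ => Finset.sum_congr rfl fun γ _ => ?_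
  simp only [Finset.mul_sum, Finset.sum_mul, Matrix.trace_sum]
  refine Finset.sum_congr rfl fun δ _ => Finset.sum_congr rfl fun β _ => ?_
  rw [hEin]
  simp only [Matrix.smul_mul, Matrix.mul_smul, Matrix.trace_smul, smul_eq_mul]
  ring
end

section
/- Let d, M be positive integers, and for each a ∈ Fin M let (B^{(a)}_α)_{α ∈ Fin m_a} be a family of d×d complex matrices, w^{(a)} : Fin m_a → ℂ, and u^{(a)} an m_a×m_a complex matrix. Let U be a unitary d×d complex matrix (Uᴴ·U = 1 and U·Uᴴ = 1) such that Uᴴ·B^{(a)}_α·U = Σ_β u^{(a)}_{αβ}·B^{(a)}_β for every a and α. Set O^{(a)} = Σ_α w^{(a)}_α·B^{(a)}_α, and for any d×d complex matrix ρ define the tensor T_{β} = Tr((Π_{a ∈ Fin M, increasing order} B^{(a)}_{β_a})·ρ) for every multi-index β ∈ Π_{a} Fin m_a. Then Tr((Π_{a ∈ Fin M, increasing order} O^{(a)})·U·ρ·Uᴴ) = Σ_{β ∈ Π_a Fin m_a} (Π_{a ∈ Fin M} (Σ_α w^{(a)}_α·u^{(a)}_{α β_a})) · T_{β}. (The M-th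 order product formula of Appendix A.2: the expectation value of a product of M observables, each supported by a single invariant subspace, equals the contraction of the tensor of initial expectation values with the evolved weight vectors.) -/
open Matrix

/-- **M-th order product formula.** If a unitary `U` acts on each family
`(B^{(a)} α)` by the matrix `u^{(a)}`, then the expectation value of the ordered
product `∏ a, O^{(a)}` of observables `O^{(a)} = ∑ α, w^{(a)} α • B^{(a)} α`
after the circuit equals the contraction of the tensor of initial expectation
values `T β = Tr((∏ a, B^{(a)} (β a)) ρ)` with the evolved weight vectors. -/
theorem stmt9 (d M : ℕ) (hd : 0 < d) (hM : 0 < M)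
    (m : Fin M → ℕ)
    (B : (a : Fin M) → Fin (m a) → Matrix (Fin d) (Fin d) ℂ)
    (w : (a : Fin M) → Fin (m a) → ℂ)
    (u : (a : Fin M) → Matrix (Fin (m a)) (Fin (m a)) ℂ)
    (U : Matrix (Fin d) (Fin d) ℂ) (hU : Uᴴ * U = 1 ∧ U * Uᴴ = 1)
    (hu : ∀ a α, Uᴴ * B a α * U = ∑ β, u a α β • B a β)
    (O : (a : Fin M) → Matrix (Fin d) (Fin d) ℂ)
    (hO : ∀ a, O a = ∑ α, w a α • B a α)
    (ρ : Matrix (Fin d) (Fin d) ℂ)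
    (T : ((a : Fin M) → Fin (m a)) → ℂ)
    (hT : ∀ β, T β =
      ((((List.finRange M).map (fun a => B a (β a))).prod) * ρ).trace) :
    (((List.finRange M).map O).prod * U * ρ * Uᴴ).trace =
      ∑ β : (a : Fin M) → Fin (m a),
        (∏ a, ∑ α, w a α * u a α (β a)) * T β := by
  obtain ⟨h1, h2⟩ := hU
  have hconj : ∀ l : List (Fin M), Uᴴ * (l.map O).prod * U
      = (l.map (fun a => Uᴴ * O a * U)).prod := by
    intro l
    induction l with
    | nil => simp [h1]
    | cons a l ih =>
      rw [List.map_cons, List.prod_cons, List.map_cons, List.prod_cons, ← ih]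
      calc Uᴴ * (O a * (l.map O).prod) * U
          = Uᴴ * O a * 1 * (l.map O).prod * U := by simp only [mul_one, mul_assoc]
        _ = _ := by rw [← h2]; simp only [mul_assoc]
  have hev : ∀ a, Uᴴ * O a * U = ∑ β, (∑ α, w a α * u a α β) • B a β := by
    intro a
    rw [hO, Finset.mul_sum, Finset.sum_mul]
    simp only [Matrix.mul_smul, Matrix.smul_mul, hu, Finset.smul_sum, Finset.sum_smul, smul_smul]
    exact Finset.sum_comm
  have hexp : ((List.finRange M).map (fun a => Uᴴ * O a * U)).prod
      = ∑ β : (a : Fin M) → Fin (m a), (∏ a, ∑ α, w a α * u a α (β a)) •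
        ((List.finRange M).map (fun a => B a (β a))).prod := by
    simp only [hev]
    have h := (MultilinearMap.mkPiAlgebraFin ℂ M (Matrix (Fin d) (Fin d) ℂ)).map_sum
      (fun a (β : Fin (m a)) => (∑ α, w a α * u a α β) • B a β)
    simp only [MultilinearMap.map_smul_univ, MultilinearMap.mkPiAlgebraFin_apply,
      List.ofFn_eq_map] at h
    exact h
  calc (((List.finRange M).map O).prod * U * ρ * Uᴴ).trace
      = ((Uᴴ * ((List.finRange M).map O).prod * U) * ρ).trace := by
        rw [Matrix.trace_mul_comm]; simp only [mul_assoc]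
    _ = _ := by
        rw [hconj, hexp, Finset.sum_mul, Matrix.trace_sum]
        simp only [Matrix.smul_mul, Matrix.trace_smul, hT, smul_eq_mul]
end
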